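/- The map γ from symmetric 2-tensors of type (2,0)+(0,2) on ℝ^6 to 3-forms, defined by γ(h)_{ijk} = h_{ip}Ψ⁺_{pjk} + h_{jp}Ψ⁺_{pki} + h_{kp}Ψ⁺_{pij}, is injective, with left inverse h_{im} = (1/4) γ(h)_{ijk} Ψ⁺_{mjk}. -/

import Mathlib

open scoped BigOperators

/-- Antisymmetrized indicator of the ordered triple `(a,b,c)`: the components of the
basic 3-form `e_a ∧ e_b ∧ e_c`. -/
def tri (a b c i j k : Fin 6) : ℝ :=
  (if (i, j, k) = (a, b, c) then (1:ℝ) else 0) - (if (i, j, k) = (a, c, b) then 1 else 0)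
  + (if (i, j, k) = (b, c, a) then 1 else 0) - (if (i, j, k) = (b, a, c) then 1 else 0)
  + (if (i, j, k) = (c, a, b) then 1 else 0) - (if (i, j, k) = (c, b, a) then 1 else 0)

/-- Components of the fundamental 2-form `F = -e12 - e34 - e56` on ℝ⁶ (0-indexed). -/
def Fc : Fin 6 → Fin 6 → ℝ := fun i j =>
  !![0,-1,0,0,0,0; 1,0,0,0,0,0; 0,0,0,-1,0,0; 0,0,1,0,0,0; 0,0,0,0,0,-1; 0,0,0,0,1,0] i j

/-- Components of `Ψ⁺ = -e135 + e236 + e146 + e245` (0-indexed). -/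
def Psip (i j k : Fin 6) : ℝ :=
  -tri 0 2 4 i j k + tri 1 2 5 i j k + tri 0 3 5 i j k + tri 1 3 4 i j k

/-- Components of `Ψ⁻ = -e136 - e145 - e235 + e246` (0-indexed). -/
def Psim (i j k : Fin 6) : ℝ :=
  -tri 0 2 5 i j k - tri 0 3 4 i j k - tri 1 2 4 i j k + tri 1 3 5 i j k

/-- Components of the 4-form `Φ = (1/2) F ∧ F`:
`Φ_{jslm} = F_{js} F_{lm} + F_{sl} F_{jm} + F_{lj} F_{sm}`. -/
def Phi (i j k l : Fin 6) : ℝ := Fc i j * Fc k l + Fc j k * Fc i l + Fc k i * Fc j l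

/-- Kronecker delta on `Fin 6`. -/
def kron (i j : Fin 6) : ℝ := if i = j then 1 else 0

/-- The map `γ : S²₋ → Λ³₁₂`, `γ(h)_{ijk} = h_{ip}Ψ⁺_{pjk} + h_{jp}Ψ⁺_{pki} + h_{kp}Ψ⁺_{pij}`. -/
def gammaMap (h : Fin 6 → Fin 6 → ℝ) (i j k : Fin 6) : ℝ :=
  ∑ p : Fin 6, (h i p * Psip p j k + h j p * Psip p k i + h k p * Psip p i j)

/-- `h` is a symmetric 2-tensor of type (2,0)+(0,2): `h(X,Y) = h(Y,X)` and
`h(JX,JY) = -h(X,Y)`, where `J e_a = F_{ia} e_i`. -/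
def IsS2Minus (h : Fin 6 → Fin 6 → ℝ) : Prop :=
  (∀ a b, h a b = h b a) ∧
  (∀ a b, (∑ i : Fin 6, ∑ j : Fin 6, Fc i a * Fc j b * h i j) = - h a b)

/-- Integer version of `tri`. -/
def triZ (a b c i j k : Fin 6) : ℤ :=
  (if (i, j, k) = (a, b, c) then 1 else 0) - (if (i, j, k) = (a, c, b) then 1 else 0)
  + (if (i, j, k) = (b, c, a) then 1 else 0) - (if (i, j, k) = (b, a, c) then 1 else 0)
  + (if (i, j, k) = (c, a, b) then 1 else 0) - (if (i, j, k) = (c, b, a) then 1 else 0)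

def PsiZ (i j k : Fin 6) : ℤ :=
  -triZ 0 2 4 i j k + triZ 1 2 5 i j k + triZ 0 3 5 i j k + triZ 1 3 4 i j k

def FZ (i j : Fin 6) : ℤ :=
  !![0,-1,0,0,0,0; 1,0,0,0,0,0; 0,0,0,-1,0,0; 0,0,1,0,0,0; 0,0,0,0,0,-1; 0,0,0,0,1,0] i j

def dZ (i j : Fin 6) : ℤ := if i = j then 1 else 0

theorem Psip_eq (i j k : Fin 6) : Psip i j k = (PsiZ i j k : ℝ) := by
  simp only [Psip, PsiZ, tri, triZ]; push_cast; rfl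

theorem Fc_eq (i j : Fin 6) : Fc i j = (FZ i j : ℝ) := by
  fin_cases i <;> fin_cases j <;> simp [Fc, FZ]

theorem PsiZ_cyc : ∀ i j k, PsiZ i j k = PsiZ j k i := by decide +kernel

theorem PsiZ_anti : ∀ i j k, PsiZ i j k = - PsiZ i k j := by decide +kernel

theorem PsiZ_contr : ∀ p i m j, ∑ k, PsiZ p k i * PsiZ m j k =
    -(dZ p m * dZ i j - dZ p j * dZ i m - FZ p m * FZ i j + FZ p j * FZ i m) := by
  decide +kernel

theorem PsiZ_contr2 : ∀ p m, ∑ j, ∑ k, PsiZ p j k * PsiZ m j k = 4 * dZ p m := by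
  decide +kernel

theorem FZ_anti : ∀ i j, FZ i j = - FZ j i := by decide +kernel

theorem Psip_contr (p i m j : Fin 6) : ∑ k, Psip p k i * Psip m j k =
    -((dZ p m : ℝ) * dZ i j - dZ p j * dZ i m - Fc p m * Fc i j + Fc p j * Fc i m) := by
  simp only [Psip_eq, Fc_eq]; exact_mod_cast PsiZ_contr p i m j

theorem Psip_contr2 (p m : Fin 6) : ∑ j, ∑ k, Psip p j k * Psip m j k = 4 * (dZ p m : ℝ) := by
  simp only [Psip_eq]; exact_mod_cast PsiZ_contr2 p m

theorem Psip_cyc (i j k : Fin 6) : Psip i j k = Psip j k i := by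
  simp only [Psip_eq]; exact_mod_cast PsiZ_cyc i j k

theorem Psip_anti (i j k : Fin 6) : Psip i j k = - Psip i k j := by
  simp only [Psip_eq]; exact_mod_cast PsiZ_anti i j k

theorem Fc_anti (i j : Fin 6) : Fc i j = - Fc j i := by
  simp only [Fc_eq]; exact_mod_cast FZ_anti i j

/-- The trace of an element of `S²₋` vanishes. -/
theorem trace_zero (h : Fin 6 → Fin 6 → ℝ) (hh : IsS2Minus h) : ∑ j, h j j = 0 := by
  have h0 := hh.2 0 0
  have h2 := hh.2 2 2
  have h4 := hh.2 4 4
  simp [Fin.sum_univ_six, Fc] at h0 h2 h4 ⊢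
  linarith

theorem cross_zero (h : Fin 6 → Fin 6 → ℝ) (hh : IsS2Minus h) (i m : Fin 6) :
    ∑ j, ∑ p, h j p * ∑ k, Psip p k i * Psip m j k = 0 := by
  have e1 : ∑ j, ∑ p, h j p * ((dZ p m : ℝ) * dZ i j) = h i m := by
    simp [dZ]
  have e2 : ∑ j, ∑ p, h j p * ((dZ p j : ℝ) * dZ i m) = 0 := by
    have : ∀ j, ∑ p, h j p * ((dZ p j : ℝ) * dZ i m) = h j j * dZ i m := by
      intro j; simp [dZ]
    simp only [this]
    rw [← Finset.sum_mul, trace_zero h hh, zero_mul]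
  have e3 : ∑ j, ∑ p, h j p * (Fc p m * Fc i j) = h i m := by
    have := hh.2 i m
    rw [← neg_eq_iff_eq_neg] at this
    rw [← this, ← Finset.sum_neg_distrib]
    refine Finset.sum_congr rfl fun j _ => ?_
    rw [← Finset.sum_neg_distrib]
    refine Finset.sum_congr rfl fun p _ => ?_
    rw [Fc_anti i j]; ring
  have e4 : ∑ j, ∑ p, h j p * (Fc p j * Fc i m) = 0 := by
    have : ∑ j, ∑ p, h j p * (Fc p j * Fc i m) = -∑ j, ∑ p, h j p * (Fc p j * Fc i m) := by
      conv_lhs => rw [Finset.sum_comm]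
      rw [← Finset.sum_neg_distrib]
      refine Finset.sum_congr rfl fun j _ => ?_
      rw [← Finset.sum_neg_distrib]
      refine Finset.sum_congr rfl fun p _ => ?_
      rw [Fc_anti j p, hh.1 p j]; ring
    linarith
  have : ∑ j, ∑ p, h j p * ∑ k, Psip p k i * Psip m j k =
      -(∑ j, ∑ p, h j p * ((dZ p m : ℝ) * dZ i j)) + ∑ j, ∑ p, h j p * ((dZ p j : ℝ) * dZ i m)
      + ∑ j, ∑ p, h j p * (Fc p m * Fc i j) - ∑ j, ∑ p, h j p * (Fc p j * Fc i m) := by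
    simp only [← Finset.sum_neg_distrib, ← Finset.sum_add_distrib, ← Finset.sum_sub_distrib]
    refine Finset.sum_congr rfl fun j _ => Finset.sum_congr rfl fun p _ => ?_
    rw [Psip_contr]; ring
  rw [this, e1, e2, e3, e4]; ring

theorem gamma_left_inv (h : Fin 6 → Fin 6 → ℝ) (hh : IsS2Minus h) (i m : Fin 6) :
    h i m = (1/4) * ∑ j : Fin 6, ∑ k : Fin 6, gammaMap h i j k * Psip m j k := by
  have c1 : ∑ j, ∑ k, ∑ p, h i p * Psip p j k * Psip m j k = 4 * h i m := by
    have : ∑ j, ∑ k, ∑ p, h i p * Psip p j k * Psip m j k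
        = ∑ p, h i p * ∑ j, ∑ k, Psip p j k * Psip m j k := by
      simp only [Finset.mul_sum]
      conv_rhs => rw [Finset.sum_comm]
      refine Finset.sum_congr rfl fun j _ => ?_
      rw [Finset.sum_comm]
      simp only [mul_assoc]
    rw [this]
    simp only [Psip_contr2]
    simp [dZ]; ring
  have c2 : ∑ j, ∑ k, ∑ p, h j p * Psip p k i * Psip m j k = 0 := by
    rw [← cross_zero h hh i m]
    refine Finset.sum_congr rfl fun j _ => ?_
    rw [Finset.sum_comm]
    simp only [Finset.mul_sum, mul_assoc]
  have c3 : ∑ j, ∑ k, ∑ p, h k p * Psip p i j * Psip m j k = 0 := by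
    rw [Finset.sum_comm, ← c2]
    refine Finset.sum_congr rfl fun j _ => Finset.sum_congr rfl fun k _ =>
      Finset.sum_congr rfl fun p _ => ?_
    rw [Psip_anti p i k, Psip_anti m k j]; ring
  have : ∑ j, ∑ k, gammaMap h i j k * Psip m j k =
      ∑ j, ∑ k, ∑ p, h i p * Psip p j k * Psip m j k
      + ∑ j, ∑ k, ∑ p, h j p * Psip p k i * Psip m j k
      + ∑ j, ∑ k, ∑ p, h k p * Psip p i j * Psip m j k := by
    simp only [← Finset.sum_add_distrib, gammaMap, Finset.sum_mul]
    refine Finset.sum_congr rfl fun j _ => Finset.sum_congr rfl fun k _ =>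
      Finset.sum_congr rfl fun p _ => ?_
    ring
  rw [this, c1, c2, c3]; ring

/-- on `S²₋` the map `γ` has the left inverse
`h_{im} = (1/4) γ(h)_{ijk} Ψ⁺_{mjk}`; in particular it is injective. -/
theorem gammaMap_left_inverse_and_injective :
    (∀ h : Fin 6 → Fin 6 → ℝ, IsS2Minus h →
      ∀ i m : Fin 6, h i m = (1/4) * ∑ j : Fin 6, ∑ k : Fin 6, gammaMap h i j k * Psip m j k) ∧
    (∀ h₁ h₂ : Fin 6 → Fin 6 → ℝ, IsS2Minus h₁ → IsS2Minus h₂ →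
      (∀ i j k, gammaMap h₁ i j k = gammaMap h₂ i j k) → h₁ = h₂) := by
  refine ⟨gamma_left_inv, fun h₁ h₂ H₁ H₂ e => ?_⟩
  funext i m
  rw [gamma_left_inv h₁ H₁ i m, gamma_left_inv h₂ H₂ i m]
  simp only [e]
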